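/- arXiv:1811.09774 — 2 statements merged into one kernel-verified Lean document; each statement's English description precedes it below -/
import Mathlib

section
/- Let n ≥ 3 and set f₁ = A₁/A₃ and f_j = A_{j+2}/A₃ for 2 ≤ j ≤ n−2, elements of K = Frac(R). Then ι_{V₁}ι_{V₂}⋯ι_{V_{n−1}} ( (A₁A₃A₄⋯A_n)^{−1} Ω ) = (−1)^{n−1} dlog f₁ ∧ dlog f₂ ∧ ⋯ ∧ dlog f_{n−2} in ⋀^{n−2}_K Ω_{K/ℂ}, i.e. the contraction of the meromorphic volume form with simple poles along the Schubert anticanonical divisor equals (−1)^{n−1} dlog(A₁/A₃) ∧ dlog(A₄/A₃) ∧ dlog(A₅/A₃) ∧ ⋯ ∧ dlog(A_n/A₃). (This is Proposition 3.4 of the paper.) -/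
/-!
Proposition 3.4 of the paper: contraction of the meromorphic volume form with
simple poles along the Schubert anticanonical divisor of the two-step flag
variety `Fℓ_{1,n−1;n}` equals
`(−1)^{n−1} dlog(A₁/A₃) ∧ dlog(A₄/A₃) ∧ ⋯ ∧ dlog(A_n/A₃)`.
-/

set_option synthInstance.maxHeartbeats 1000000
set_option maxHeartbeats 1000000

noncomputable section

open MvPolynomial

/-- Index type for the `2n−3` variables: `z_j` for `2 ≤ j ≤ n` and `ẑ_j` for
`2 ≤ j ≤ n−1`. -/
abbrev FlagIdx (n : ℕ) := {j : ℕ // 2 ≤ j ∧ j ≤ n} ⊕ {j : ℕ // 2 ≤ j ∧ j ≤ n - 1}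

/-- The coordinate ring `R = ℂ[z₂,…,z_n, ẑ₂,…,ẑ_{n−1}]`. -/
abbrev FlagR (n : ℕ) := MvPolynomial (FlagIdx n) ℂ

/-- The fraction field `K = Frac(R)`. -/
abbrev FlagK (n : ℕ) := FractionRing (FlagR n)

/-- The coordinate `z_j` (with the convention `z₁ = 1`). -/
def flagZ (n j : ℕ) : FlagR n :=
  if h : 2 ≤ j ∧ j ≤ n then X (Sum.inl ⟨j, h⟩) else 1

/-- The coordinate `ẑ_j` (with the convention `ẑ_n = 1`). -/
def flagZh (n j : ℕ) : FlagR n :=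
  if h : 2 ≤ j ∧ j ≤ n - 1 then X (Sum.inr ⟨j, h⟩) else 1

/-- `A_j = z_j ẑ_j` for `j ≥ 2` (so `A_n = z_n`), and
`A₁ = A₂ + ∑_{j=3}^n (−1)^j A_j`. -/
def flagA (n j : ℕ) : FlagR n :=
  if j = 1 then
    flagZ n 2 * flagZh n 2 + ∑ k ∈ Finset.Icc 3 n, (-1 : FlagR n) ^ k * (flagZ n k * flagZh n k)
  else flagZ n j * flagZh n j

/-- The ℂ-derivations `V_{i−1} = z_i ∂/∂z_i − ẑ_i ∂/∂ẑ_i` for `2 ≤ i ≤ n−1`, and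
`V_{n−1} = z_n ∂/∂z_n + ∑_{j=2}^{n−1} ẑ_j ∂/∂ẑ_j`. -/
def flagV (n i : ℕ) : Derivation ℂ (FlagR n) (FlagR n) :=
  if i = n - 1 then
    MvPolynomial.mkDerivation ℂ (fun s => match s with
      | Sum.inl ⟨j, _⟩ => if j = n then flagZ n j else 0
      | Sum.inr ⟨j, _⟩ => flagZh n j)
  else
    MvPolynomial.mkDerivation ℂ (fun s => match s with
      | Sum.inl ⟨j, _⟩ => if j = i + 1 then flagZ n j else 0
      | Sum.inr ⟨j, _⟩ => if j = i + 1 then -(flagZh n j) else 0)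

/-- Contraction (interior product) of `⋀_A Ω_{A/ℂ}` by the `A`-linear functional
`Ω_{A/ℂ} → A` determined by `dg ↦ V g`, for a ℂ-derivation `V` of `A`. -/
def contrDer {A : Type} [CommRing A] [Algebra ℂ A] (V : Derivation ℂ A A) :
    ExteriorAlgebra A (Ω[A⁄ℂ]) →ₗ[A] ExteriorAlgebra A (Ω[A⁄ℂ]) :=
  CliffordAlgebra.contractLeft ((KaehlerDifferential.linearMapEquivDerivation ℂ A).symm V)

/-- `dlog f = f⁻¹ df ∈ Ω_{K/ℂ}`. -/
def dlog (n : ℕ) (f : FlagK n) : Ω[FlagK n⁄ℂ] :=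
  f⁻¹ • KaehlerDifferential.D ℂ (FlagK n) f

/-- The image of `A_j` in `K`. -/
def flagAK (n j : ℕ) : FlagK n := algebraMap (FlagR n) (FlagK n) (flagA n j)

/-- `Ω = dz₂∧dẑ₂∧⋯∧dz_{n−1}∧dẑ_{n−1}∧dz_n`, viewed in `⋀_K Ω_{K/ℂ}`. -/
def flagOmegaK (n : ℕ) : ExteriorAlgebra (FlagK n) (Ω[FlagK n⁄ℂ]) :=
  (((List.Ico 2 n).map (fun j =>
      ExteriorAlgebra.ι (FlagK n)
        (KaehlerDifferential.D ℂ (FlagK n) (algebraMap (FlagR n) (FlagK n) (flagZ n j))) *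
      ExteriorAlgebra.ι (FlagK n)
        (KaehlerDifferential.D ℂ (FlagK n) (algebraMap (FlagR n) (FlagK n) (flagZh n j))))).prod) *
    ExteriorAlgebra.ι (FlagK n)
      (KaehlerDifferential.D ℂ (FlagK n) (algebraMap (FlagR n) (FlagK n) (flagZ n n)))

/-!
For `2 ≤ j < n` the field `V_{j-1}` involves only the coordinates `z_j, ẑ_j`, and contracting
`dz_j ∧ dẑ_j` with it gives `z_j dẑ_j + ẑ_j dz_j = dA_j`. Contracting `Ω` with `V₁, …, V_{n-2}`
therefore leaves `dA₂ ∧ dA₃ ∧ ⋯ ∧ dA_n`, in which `dA₂` may be replaced by `dA₁` because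
`A₁ - A₂` is a linear combination of `A₃, …, A_n`. Dividing by `A₁A₃⋯A_n` yields
`dlog A₁ ∧ dlog A₃ ∧ ⋯ ∧ dlog A_n`. Finally `V_{n-1}` is an Euler field, `V_{n-1} A_j = A_j` for all
`j`, so it takes the value `1` on each `dlog A_j`; once `dlog A₃` is subtracted from every other
factor, only the factor `dlog A₃` survives the contraction.
-/

section ExteriorAlgebra

open ExteriorAlgebra
open CliffordAlgebra (contractLeft contractLeft_ι_mul contractLeft_one contractLeft_comm)

variable {κ R M : Type*} [CommRing R] [AddCommGroup M] [Module R M]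

/-- The wedge product `v k₁ ∧ ⋯ ∧ v kₘ` in the exterior algebra, for a list `l = [k₁, …, kₘ]` of
indices. -/
def listWedge (v : κ → M) (l : List κ) : ExteriorAlgebra R M :=
  (l.map fun k => ι R (v k)).prod

/-- The iterated interior product `ω ↦ ι_{φ k₁} ⋯ ι_{φ kₘ} ω`, for a list `l = [k₁, …, kₘ]` of
indices; the last functional of the list is contracted first. -/
def listContract (φ : κ → Module.Dual R M) (l : List κ) : Module.End R (ExteriorAlgebra R M) :=
  (l.map fun k => contractLeft (φ k)).prod

lemma listWedge_nil (v : κ → M) : listWedge (R := R) v [] = 1 :=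
  rfl

lemma listWedge_cons (v : κ → M) (k : κ) (l : List κ) :
    listWedge (R := R) v (k :: l) = ι R (v k) * listWedge v l :=
  List.prod_cons

lemma listWedge_singleton (v : κ → M) (k : κ) : listWedge v [k] = ι R (v k) :=
  List.prod_singleton

lemma listWedge_append (v : κ → M) (l l' : List κ) :
    listWedge (R := R) v (l ++ l') = listWedge v l * listWedge v l' := by
  rw [listWedge, List.map_append, List.prod_append, listWedge, listWedge]

lemma listWedge_congr {v w : κ → M} {l : List κ} (h : ∀ k ∈ l, v k = w k) :
    listWedge (R := R) v l = listWedge w l :=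
  congrArg List.prod (List.map_congr_left fun k hk => congrArg _ (h k hk))

lemma listContract_cons_apply (φ : κ → Module.Dual R M) (k : κ) (l : List κ)
    (ω : ExteriorAlgebra R M) :
    listContract φ (k :: l) ω = contractLeft (φ k) (listContract φ l ω) :=
  rfl

lemma listContract_eq_foldr (φ : κ → Module.Dual R M) (l : List κ) (ω : ExteriorAlgebra R M) :
    listContract φ l ω = l.foldr (fun k η => contractLeft (φ k) η) ω := by
  induction l with
  | nil => rfl
  | cons k l ih => rw [listContract_cons_apply, ih, List.foldr_cons]

lemma ι_mul_ι_mul_eq_neg (u v : M) (ω : ExteriorAlgebra R M) :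
    ι R u * (ι R v * ω) = -(ι R v * (ι R u * ω)) := by
  rw [← mul_assoc, ← mul_assoc, ← neg_mul, eq_neg_of_add_eq_zero_left (ι_add_mul_swap u v)]

lemma listWedge_cons_cons_swap (v : κ → M) (i j : κ) (l : List κ) :
    listWedge (R := R) v (i :: j :: l) = -listWedge v (j :: i :: l) := by
  simp only [listWedge_cons]
  exact ι_mul_ι_mul_eq_neg _ _ _

lemma ι_mul_ι_mul_self (u : M) (ω : ExteriorAlgebra R M) : ι R u * (ι R u * ω) = 0 := by
  rw [← mul_assoc, ι_sq_zero, zero_mul]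

lemma listWedge_smul (s : κ → R) (v : κ → M) (l : List κ) :
    listWedge (R := R) (fun k => s k • v k) l = (l.map s).prod • listWedge v l := by
  induction l with
  | nil => simp [listWedge_nil]
  | cons k l ih =>
    rw [listWedge_cons, listWedge_cons, ih, map_smul, smul_mul_smul_comm, List.map_cons,
      List.prod_cons]

lemma ι_mul_listWedge_of_mem (v : κ → M) {k : κ} {l : List κ} (hk : k ∈ l) :
    ι R (v k) * listWedge v l = 0 := by
  induction l with
  | nil => cases hk
  | cons i l ih =>
    rw [listWedge_cons]
    rcases List.mem_cons.1 hk with rfl | hkl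
    · exact ι_mul_ι_mul_self _ _
    · rw [ι_mul_ι_mul_eq_neg, ih hkl, mul_zero, neg_zero]

lemma ι_mul_listWedge_of_mem_span {u : M} {v : κ → M} {l : List κ}
    (hu : u ∈ Submodule.span R (v '' {k | k ∈ l})) :
    ι R u * listWedge v l = 0 := by
  have hker : Submodule.span R (v '' {k | k ∈ l}) ≤
      LinearMap.ker (LinearMap.mulRight R (listWedge v l) ∘ₗ ι R) :=
    Submodule.span_le.2 (Set.image_subset_iff.2 fun _ hk => ι_mul_listWedge_of_mem v hk)
  exact hker hu

lemma ι_mul_listWedge_sub (u : M) (v : κ → M) (l : List κ) :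
    ι R u * listWedge (fun k => v k - u) l = ι R u * listWedge v l := by
  induction l with
  | nil => rfl
  | cons k l ih =>
    rw [listWedge_cons, listWedge_cons, map_sub, sub_mul, mul_sub, ι_mul_ι_mul_self, sub_zero,
      ι_mul_ι_mul_eq_neg, ih, ← ι_mul_ι_mul_eq_neg]

lemma contractLeft_listWedge_mul_eq_zero {φ : Module.Dual R M} {v : κ → M} {l : List κ}
    {ω : ExteriorAlgebra R M} (hv : ∀ k ∈ l, φ (v k) = 0) (hω : contractLeft φ ω = 0) :
    contractLeft φ (listWedge v l * ω) = 0 := by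
  induction l with
  | nil => rwa [listWedge_nil, one_mul]
  | cons k l ih =>
    rw [List.forall_mem_cons] at hv
    rw [listWedge_cons, mul_assoc, contractLeft_ι_mul, ih hv.2, hv.1, zero_smul, mul_zero,
      sub_zero]

lemma contractLeft_ι_mul_listWedge_of_eq_one {φ : Module.Dual R M} {u : M} {v : κ → M} {l : List κ}
    (hu : φ u = 1) (hv : ∀ k ∈ l, φ (v k) = 1) :
    contractLeft φ (ι R u * listWedge v l) = listWedge (fun k => v k - u) l := by
  have hsub : contractLeft φ (listWedge (R := R) (fun k => v k - u) l) = 0 := by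
    rw [← mul_one (listWedge _ l)]
    exact contractLeft_listWedge_mul_eq_zero
      (fun k hk => by rw [map_sub, hv k hk, hu, sub_self]) (contractLeft_one _ φ)
  rw [← ι_mul_listWedge_sub, contractLeft_ι_mul, hsub, hu, one_smul, mul_zero, sub_zero]

lemma listContract_contractLeft (φ : κ → Module.Dual R M) (ψ : Module.Dual R M) (l : List κ)
    (ω : ExteriorAlgebra R M) :
    listContract φ l (contractLeft ψ ω) =
      (-1 : R) ^ l.length • contractLeft ψ (listContract φ l ω) := by
  induction l with
  | nil => rw [List.length_nil, pow_zero, one_smul]; rfl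
  | cons k l ih =>
    rw [listContract_cons_apply, ih, map_smul, contractLeft_comm, listContract_cons_apply,
      List.length_cons, pow_succ, mul_neg_one, neg_smul, smul_neg]

lemma listContract_ι_mul_ι_mul {φ : κ → Module.Dual R M} {l : List κ} {u v : M}
    (hu : ∀ k ∈ l, φ k u = 0) (hv : ∀ k ∈ l, φ k v = 0) (ω : ExteriorAlgebra R M) :
    listContract φ l (ι R u * (ι R v * ω)) = ι R u * (ι R v * listContract φ l ω) := by
  induction l with
  | nil => rfl
  | cons k l ih =>
    rw [List.forall_mem_cons] at hu hv
    simp only [listContract_cons_apply, ih hu.2 hv.2, contractLeft_ι_mul, hu.1, hv.1,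
      zero_smul, zero_sub, mul_neg, neg_neg]

lemma listContract_prod_ι_mul_ι_mul {φ : κ → Module.Dual R M} {a b : κ → M} {l : List κ}
    (hl : l.Nodup) {ω : ExteriorAlgebra R M}
    (ha : ∀ i ∈ l, ∀ j ∈ l, j ≠ i → φ i (a j) = 0)
    (hb : ∀ i ∈ l, ∀ j ∈ l, j ≠ i → φ i (b j) = 0)
    (hω : ∀ i ∈ l, contractLeft (φ i) ω = 0) :
    listContract φ l ((l.map fun i => ι R (a i) * ι R (b i)).prod * ω) =
      listWedge (fun i => φ i (a i) • b i - φ i (b i) • a i) l * ω := by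
  induction l with
  | nil => rfl
  | cons i l ih =>
    obtain ⟨hil, hl⟩ := List.nodup_cons.1 hl
    have hne : ∀ j ∈ l, j ≠ i := fun j hj hji => hil (hji ▸ hj)
    simp only [List.forall_mem_cons, forall_and] at ha hb hω
    obtain ⟨⟨-, hai⟩, hia, ha⟩ := ha
    obtain ⟨⟨-, hbi⟩, hib, hb⟩ := hb
    have hrest : contractLeft (φ i)
        (listWedge (fun j => φ j (a j) • b j - φ j (b j) • a j) l * ω) = 0 :=
      contractLeft_listWedge_mul_eq_zero
        (fun j hj => by simp [hia j hj (hne j hj), hib j hj (hne j hj)]) hω.1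
    rw [listContract_cons_apply, List.map_cons, List.prod_cons, mul_assoc, mul_assoc,
      listContract_ι_mul_ι_mul (fun j hj => hai j hj (hne j hj).symm)
        (fun j hj => hbi j hj (hne j hj).symm),
      ih hl ha hb hω.2, contractLeft_ι_mul, contractLeft_ι_mul, hrest, mul_zero,
      sub_zero, mul_smul_comm, ← smul_mul_assoc, ← smul_mul_assoc, ← sub_mul, ← map_smul,
      ← map_smul, ← map_sub, listWedge_cons, mul_assoc]

end ExteriorAlgebra

lemma prod_Icc_eq_list_prod_map_Ico {N : Type*} [CommMonoid N] (f : ℕ → N) (a b : ℕ) :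
    ∏ k ∈ Finset.Icc a b, f k = ((List.Ico a (b + 1)).map f).prod := by
  rw [← List.prod_toFinset f (List.Ico.nodup a (b + 1))]
  congr 1
  ext k
  simp

section Coordinates

variable {n i j : ℕ}

lemma flagZ_eq_X (hj : 2 ≤ j ∧ j ≤ n) : flagZ n j = X (Sum.inl ⟨j, hj⟩) :=
  dif_pos hj

lemma flagZh_eq_X (hj : 2 ≤ j ∧ j ≤ n - 1) : flagZh n j = X (Sum.inr ⟨j, hj⟩) :=
  dif_pos hj

lemma flagZh_self (n : ℕ) : flagZh n n = 1 :=
  dif_neg (by omega)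

lemma flagV_pred_flagZ (hi : 2 ≤ i ∧ i < n) (hj : 2 ≤ j ∧ j ≤ n) :
    flagV n (i - 1) (flagZ n j) = if j = i then flagZ n j else 0 := by
  conv_lhs => rw [flagZ_eq_X hj, flagV, if_neg (by omega), mkDerivation_X]
  simp only [Nat.sub_add_cancel (one_le_two.trans hi.1)]

lemma flagV_pred_flagZh (hi : 2 ≤ i ∧ i < n) (hj : 2 ≤ j ∧ j ≤ n - 1) :
    flagV n (i - 1) (flagZh n j) = if j = i then -flagZh n j else 0 := by
  conv_lhs => rw [flagZh_eq_X hj, flagV, if_neg (by omega), mkDerivation_X]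
  simp only [Nat.sub_add_cancel (one_le_two.trans hi.1)]

lemma flagV_last_flagZ (hj : 2 ≤ j ∧ j ≤ n) :
    flagV n (n - 1) (flagZ n j) = if j = n then flagZ n j else 0 := by
  conv_lhs => rw [flagZ_eq_X hj, flagV, if_pos rfl, mkDerivation_X]

lemma flagV_last_flagZh (hj : 2 ≤ j ∧ j ≤ n - 1) :
    flagV n (n - 1) (flagZh n j) = flagZh n j := by
  conv_lhs => rw [flagZh_eq_X hj, flagV, if_pos rfl, mkDerivation_X]

lemma flagA_eq_mul (hj : j ≠ 1) : flagA n j = flagZ n j * flagZh n j :=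
  if_neg hj

lemma flagA_self (hn : n ≠ 1) : flagA n n = flagZ n n := by
  rw [flagA_eq_mul hn, flagZh_self, mul_one]

lemma flagA_one (n : ℕ) :
    flagA n 1 = flagA n 2 + ∑ k ∈ Finset.Icc 3 n, (-1 : ℂ) ^ k • flagA n k := by
  rw [flagA_eq_mul (j := 2) (by decide), flagA, if_pos rfl]
  congr 1
  refine Finset.sum_congr rfl fun k hk => ?_
  have hk3 := (Finset.mem_Icc.1 hk).1
  rw [flagA_eq_mul (by omega), smul_eq_C_mul, map_pow, map_neg, map_one]

lemma flagV_last_flagA_of_two_le (hj : 2 ≤ j ∧ j ≤ n) :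
    flagV n (n - 1) (flagA n j) = flagA n j := by
  rcases hj.2.eq_or_lt with rfl | hjn
  · rw [flagA_self (by omega), flagV_last_flagZ hj, if_pos rfl]
  · rw [flagA_eq_mul (by omega), Derivation.leibniz, flagV_last_flagZ hj, if_neg hjn.ne,
      flagV_last_flagZh (by omega), smul_zero, add_zero, smul_eq_mul]

lemma flagV_last_flagA (hn : 2 ≤ n) (hj : 1 ≤ j ∧ j ≤ n) :
    flagV n (n - 1) (flagA n j) = flagA n j := by
  rcases hj.1.eq_or_lt with rfl | hj2
  · rw [flagA_one, map_add, map_sum, flagV_last_flagA_of_two_le ⟨le_rfl, hn⟩]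
    congr 1
    refine Finset.sum_congr rfl fun k hk => ?_
    have hk := Finset.mem_Icc.1 hk
    rw [Derivation.map_smul, flagV_last_flagA_of_two_le (by omega)]
  · exact flagV_last_flagA_of_two_le ⟨hj2, hj.2⟩

lemma flagZh_ne_zero (n j : ℕ) : flagZh n j ≠ 0 := by
  unfold flagZh
  split_ifs
  exacts [X_ne_zero _, one_ne_zero]

-- Setting `z_j = 0` for `j ≥ 3` turns `A₁` into `A₂ = z₂ ẑ₂`.
lemma flagA_one_ne_zero (hn : 2 ≤ n) : flagA n 1 ≠ 0 := by
  intro hzero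
  let p : FlagIdx n → ℂ := Sum.elim (fun j => if j.1 = 2 then 1 else 0) fun _ => 1
  have hZh : ∀ j, eval p (flagZh n j) = 1 := fun j => by
    unfold flagZh
    split_ifs <;> simp [p]
  have hZ : ∀ j, 2 ≤ j ∧ j ≤ n → eval p (flagZ n j) = if j = 2 then 1 else 0 := fun j hj => by
    simp [flagZ_eq_X hj, p]
  have hA : ∀ k ∈ Finset.Icc 3 n, eval p ((-1 : ℂ) ^ k • flagA n k) = 0 := fun k hk => by
    have hk := Finset.mem_Icc.1 hk
    rw [smul_eval, flagA_eq_mul (by omega), map_mul, hZ k (by omega), if_neg (by omega), zero_mul,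
      mul_zero]
  have hone : eval p (flagA n 1) = 1 := by
    rw [flagA_one, map_add, map_sum, Finset.sum_eq_zero hA, flagA_eq_mul (by decide), map_mul,
      hZ 2 ⟨le_rfl, hn⟩, if_pos rfl, hZh, mul_one, add_zero]
  rw [hzero, map_zero] at hone
  exact zero_ne_one hone

lemma flagA_ne_zero (hn : 2 ≤ n) (hj : 1 ≤ j ∧ j ≤ n) : flagA n j ≠ 0 := by
  rcases hj.1.eq_or_lt with rfl | hj2
  · exact flagA_one_ne_zero hn
  · rw [flagA_eq_mul (by omega), flagZ_eq_X ⟨hj2, hj.2⟩]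
    exact mul_ne_zero (X_ne_zero _) (flagZh_ne_zero n j)

lemma flagAK_ne_zero (hn : 2 ≤ n) (hj : 1 ≤ j ∧ j ≤ n) : flagAK n j ≠ 0 :=
  (map_ne_zero_iff _ (IsFractionRing.injective (FlagR n) (FlagK n))).2 (flagA_ne_zero hn hj)

end Coordinates

section Differentials

variable {n : ℕ}

/-- The differential `g ↦ dg ∈ Ω_{K/ℂ}` of polynomials `g ∈ R`, as a derivation of `R`. -/
def flagD (n : ℕ) : Derivation ℂ (FlagR n) (Ω[FlagK n⁄ℂ]) :=
  (KaehlerDifferential.D ℂ (FlagK n)).compAlgebraMap (FlagR n)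

lemma flagD_mul (f g : FlagR n) :
    flagD n (f * g) = algebraMap (FlagR n) (FlagK n) f • flagD n g +
      algebraMap (FlagR n) (FlagK n) g • flagD n f := by
  rw [Derivation.leibniz, algebraMap_smul, algebraMap_smul]

lemma liftKaehlerDifferential_flagD {U : Derivation ℂ (FlagK n) (FlagK n)}
    {V : Derivation ℂ (FlagR n) (FlagR n)}
    (hUV : ∀ g, U (algebraMap (FlagR n) (FlagK n) g) = algebraMap (FlagR n) (FlagK n) (V g))
    (g : FlagR n) :
    U.liftKaehlerDifferential (flagD n g) = algebraMap (FlagR n) (FlagK n) (V g) :=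
  (U.liftKaehlerDifferential_comp_D _).trans (hUV g)

lemma flagOmegaK_eq (hn : n ≠ 1) :
    flagOmegaK n = ((List.Ico 2 n).map fun j =>
      ExteriorAlgebra.ι (FlagK n) (flagD n (flagZ n j)) *
        ExteriorAlgebra.ι (FlagK n) (flagD n (flagZh n j))).prod *
      ExteriorAlgebra.ι (FlagK n) (flagD n (flagA n n)) := by
  rw [flagA_self hn]
  rfl

lemma flagD_flagA_one_sub_mem_span (n : ℕ) :
    flagD n (flagA n 1) - flagD n (flagA n 2) ∈ Submodule.span (FlagK n)
      ((fun k => flagD n (flagA n k)) '' {k | k ∈ List.Ico 3 (n + 1)}) := by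
  rw [flagA_one, map_add, map_sum, add_sub_cancel_left]
  refine Submodule.sum_mem _ fun k hk => ?_
  have hk := Finset.mem_Icc.1 hk
  rw [Derivation.map_smul, ← algebraMap_smul (FlagK n) ((-1 : ℂ) ^ k)]
  exact Submodule.smul_mem _ _ (Submodule.subset_span ⟨k, List.Ico.mem.2 (by omega), rfl⟩)

lemma listWedge_flagD_flagA_Ico_two (hn : 2 ≤ n) :
    listWedge (R := FlagK n) (fun k => flagD n (flagA n k)) (List.Ico 2 (n + 1)) =
      listWedge (fun k => flagD n (flagA n k)) (1 :: List.Ico 3 (n + 1)) := by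
  rw [List.Ico.eq_cons (by omega), listWedge_cons, listWedge_cons, eq_comm, ← sub_eq_zero,
    ← sub_mul, ← map_sub]
  exact ι_mul_listWedge_of_mem_span (flagD_flagA_one_sub_mem_span n)

lemma dlog_flagAK (n k : ℕ) : dlog n (flagAK n k) = (flagAK n k)⁻¹ • flagD n (flagA n k) :=
  rfl

lemma inv_prod_smul_listWedge_flagD_flagA (n : ℕ) :
    (flagAK n 1 * ∏ k ∈ Finset.Icc 3 n, flagAK n k)⁻¹ •
        listWedge (R := FlagK n) (fun k => flagD n (flagA n k)) (1 :: List.Ico 3 (n + 1)) =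
      listWedge (fun k => dlog n (flagAK n k)) (1 :: List.Ico 3 (n + 1)) := by
  simp only [dlog_flagAK]
  rw [listWedge_smul, List.map_cons, List.prod_cons, mul_inv, ← Finset.prod_inv_distrib,
    prod_Icc_eq_list_prod_map_Ico]

lemma dlog_div {f g : FlagK n} (hf : f ≠ 0) (hg : g ≠ 0) :
    dlog n (f / g) = dlog n f - dlog n g := by
  have hcoeff_f : (f / g)⁻¹ * g⁻¹ ^ 2 * g = f⁻¹ := by field_simp
  have hcoeff_g : (f / g)⁻¹ * g⁻¹ ^ 2 * f = g⁻¹ := by field_simp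
  rw [dlog, Derivation.leibniz_div, smul_sub, smul_sub, smul_smul, smul_smul, smul_smul, smul_smul,
    hcoeff_f, hcoeff_g, dlog, dlog]

end Differentials

section Contraction

open CliffordAlgebra (contractLeft contractLeft_ι)

variable {n : ℕ}

lemma apply_dlog_flagAK_eq_one {φ : Module.Dual (FlagK n) (Ω[FlagK n⁄ℂ])}
    (hφ : ∀ g, φ (flagD n g) = algebraMap (FlagR n) (FlagK n) (flagV n (n - 1) g))
    (hn : 2 ≤ n) {k : ℕ} (hk : 1 ≤ k ∧ k ≤ n) :
    φ (dlog n (flagAK n k)) = 1 := by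
  rw [dlog_flagAK, map_smul, hφ, flagV_last_flagA hn hk]
  exact inv_mul_cancel₀ (flagAK_ne_zero hn hk)

lemma smul_flagD_sub_smul_flagD_eq {φ : Module.Dual (FlagK n) (Ω[FlagK n⁄ℂ])} {j : ℕ}
    (hφ : ∀ g, φ (flagD n g) = algebraMap (FlagR n) (FlagK n) (flagV n (j - 1) g))
    (hj : 2 ≤ j ∧ j < n) :
    φ (flagD n (flagZ n j)) • flagD n (flagZh n j) -
        φ (flagD n (flagZh n j)) • flagD n (flagZ n j) = flagD n (flagA n j) := by
  rw [hφ, hφ, flagV_pred_flagZ hj (by omega), flagV_pred_flagZh hj (by omega), if_pos rfl,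
    if_pos rfl, map_neg, neg_smul, sub_neg_eq_add, flagA_eq_mul (by omega), flagD_mul]

lemma listContract_flagOmegaK {φ : ℕ → Module.Dual (FlagK n) (Ω[FlagK n⁄ℂ])}
    (hφ : ∀ j g, φ j (flagD n g) = algebraMap (FlagR n) (FlagK n) (flagV n (j - 1) g))
    (hn : 2 ≤ n) :
    listContract φ (List.Ico 2 n) (flagOmegaK n) =
      listWedge (fun k => flagD n (flagA n k)) (List.Ico 2 (n + 1)) := by
  have hZ : ∀ i ∈ List.Ico 2 n, ∀ j, 2 ≤ j ∧ j ≤ n → j ≠ i → φ i (flagD n (flagZ n j)) = 0 :=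
    fun i hi j hj hji => by
      rw [hφ, flagV_pred_flagZ (List.Ico.mem.1 hi) hj, if_neg hji, map_zero]
  have hZh : ∀ i ∈ List.Ico 2 n, ∀ j ∈ List.Ico 2 n, j ≠ i → φ i (flagD n (flagZh n j)) = 0 :=
    fun i hi j hj hji => by
      have hj := List.Ico.mem.1 hj
      rw [hφ, flagV_pred_flagZh (List.Ico.mem.1 hi) (by omega), if_neg hji, map_zero]
  have hlast : ∀ i ∈ List.Ico 2 n, contractLeft (φ i)
      (ExteriorAlgebra.ι (FlagK n) (flagD n (flagA n n))) = 0 := fun i hi => by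
    rw [flagA_self (by omega), contractLeft_ι,
      hZ i hi n ⟨hn, le_rfl⟩ (List.Ico.mem.1 hi).2.ne', map_zero]
  rw [flagOmegaK_eq (by omega), List.Ico.succ_top hn, listWedge_append, listWedge_singleton,
    listContract_prod_ι_mul_ι_mul (List.Ico.nodup 2 n)
      (fun i hi j hj => hZ i hi j ⟨(List.Ico.mem.1 hj).1, (List.Ico.mem.1 hj).2.le⟩) hZh hlast,
    listWedge_congr fun j hj => smul_flagD_sub_smul_flagD_eq (hφ j) (List.Ico.mem.1 hj)]

lemma contractLeft_listWedge_dlog_flagAK {φ : Module.Dual (FlagK n) (Ω[FlagK n⁄ℂ])}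
    (hφ : ∀ g, φ (flagD n g) = algebraMap (FlagR n) (FlagK n) (flagV n (n - 1) g))
    (hn : 3 ≤ n) :
    contractLeft φ
        (listWedge (fun k => dlog n (flagAK n k)) (1 :: List.Ico 3 (n + 1))) =
      -listWedge (fun k => dlog n (flagAK n k / flagAK n 3)) (1 :: List.Ico 4 (n + 1)) := by
  have hmem : ∀ k ∈ 1 :: List.Ico 4 (n + 1), 1 ≤ k ∧ k ≤ n := fun k hk => by
    have hk : k = 1 ∨ 4 ≤ k ∧ k < n + 1 := by simpa using hk
    omega
  have hA₃ : flagAK n 3 ≠ 0 := flagAK_ne_zero (by omega) (by omega)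
  have hone : ∀ k, 1 ≤ k ∧ k ≤ n → φ (dlog n (flagAK n k)) = 1 := fun k hk =>
    apply_dlog_flagAK_eq_one hφ (by omega) hk
  rw [List.Ico.eq_cons (by omega), listWedge_cons_cons_swap, listWedge_cons, map_neg,
    contractLeft_ι_mul_listWedge_of_eq_one (hone 3 (by omega)) fun k hk => hone k (hmem k hk),
    listWedge_congr fun k hk => dlog_div (flagAK_ne_zero (by omega) (hmem k hk)) hA₃]

end Contraction

/-- Proposition 3.4: with `f₁ = A₁/A₃` and `f_j = A_{j+2}/A₃` for `2 ≤ j ≤ n−2`,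
`ι_{V₁}⋯ι_{V_{n−1}} ((A₁A₃A₄⋯A_n)⁻¹ Ω) = (−1)^{n−1} dlog f₁ ∧ ⋯ ∧ dlog f_{n−2}`,
where the `ι_{V_i}` are the (unique) extensions of the derivations `V_i` to `K`. -/
theorem flag_schubert_contraction (n : ℕ) (hn : 3 ≤ n)
    (W : ℕ → Derivation ℂ (FlagK n) (FlagK n))
    (hW : ∀ i, ∀ g : FlagR n,
      W i (algebraMap (FlagR n) (FlagK n) g) = algebraMap (FlagR n) (FlagK n) (flagV n i g)) :
    (List.Ico 1 n).foldr (fun i ω => contrDer (W i) ω)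
        (((flagAK n 1 * ∏ k ∈ Finset.Icc 3 n, flagAK n k)⁻¹) • flagOmegaK n) =
      ((-1 : FlagK n) ^ (n - 1)) •
        (ExteriorAlgebra.ι (FlagK n) (dlog n (flagAK n 1 / flagAK n 3)) *
          (((List.Ico 4 (n + 1)).map (fun k =>
            ExteriorAlgebra.ι (FlagK n) (dlog n (flagAK n k / flagAK n 3)))).prod)) := by
  let φ (j : ℕ) : Module.Dual (FlagK n) (Ω[FlagK n⁄ℂ]) := (W (j - 1)).liftKaehlerDifferential
  have hφ (j : ℕ) (g : FlagR n) :
      φ j (flagD n g) = algebraMap (FlagR n) (FlagK n) (flagV n (j - 1) g) :=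
    liftKaehlerDifferential_flagD (hW _) g
  have hindices : List.Ico 1 n = (List.Ico 2 n ++ [n]).map (· - 1) := by
    rw [← List.Ico.succ_top (by omega)]
    exact (List.Ico.map_sub 2 (n + 1) 1 one_le_two).symm
  have hsign : (-1 : FlagK n) ^ (n - 1) = -(-1) ^ (n - 2) := by
    rw [show n - 1 = n - 2 + 1 by omega, pow_succ, mul_neg_one]
  calc
    _ = listContract φ (List.Ico 2 n) (CliffordAlgebra.contractLeft (φ n)
          ((flagAK n 1 * ∏ k ∈ Finset.Icc 3 n, flagAK n k)⁻¹ • flagOmegaK n)) := by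
      rw [hindices, List.foldr_map, List.foldr_append, listContract_eq_foldr]
      rfl
    _ = (-1 : FlagK n) ^ (n - 2) • CliffordAlgebra.contractLeft (φ n)
          (listWedge (fun k => dlog n (flagAK n k)) (1 :: List.Ico 3 (n + 1))) := by
      rw [listContract_contractLeft, List.Ico.length, map_smul,
        listContract_flagOmegaK hφ (by omega), listWedge_flagD_flagA_Ico_two (by omega),
        inv_prod_smul_listWedge_flagD_flagA]
    _ = (-1 : FlagK n) ^ (n - 1) •
          listWedge (fun k => dlog n (flagAK n k / flagAK n 3)) (1 :: List.Ico 4 (n + 1)) := by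
      rw [contractLeft_listWedge_dlog_flagAK (hφ n) hn, hsign, smul_neg, neg_smul]
    _ = _ := by rw [listWedge_cons, listWedge]

end
end

section
/- Let m ≥ 2. With Ω = dz₂∧dz₃∧⋯∧dz_{2m+1} ∈ ⋀^{2m}_R Ω_{R/ℂ}, the iterated contraction satisfies ι_{V_{m+1}} ι_{V_m} ι_{V₁} ι_{V₂} ⋯ ι_{V_{m−1}} Ω = Σ_{j=1}^{m} (−1)^{m+j} A_j dA₁∧⋯∧dA_{j−1}∧dA_{j+1}∧⋯∧dA_m in ⋀^{m−1}_R Ω_{R/ℂ}. (This is Lemma 3.7 of the paper, the key contraction computation for the even-dimensional quadric Q_{2m}.) -/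
set_option synthInstance.maxHeartbeats 1000000
set_option maxHeartbeats 1000000

noncomputable section

open MvPolynomial

/-- The coordinate ring `R = ℂ[z₂, z₃, …, z_{2m+1}]` of the affine chart
`{x₀ ≠ 0}` of the even quadric `Q_{2m}`. -/
abbrev QevR (m : ℕ) := MvPolynomial {j : ℕ // 2 ≤ j ∧ j ≤ 2 * m + 1} ℂ

/-- The fraction field `K = Frac(R)`. -/
abbrev QevK (m : ℕ) := FractionRing (QevR m)

/-- The coordinate `z_j` for `2 ≤ j ≤ 2m+1`. -/
def qevZ (m j : ℕ) : QevR m :=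
  if h : 2 ≤ j ∧ j ≤ 2 * m + 1 then X ⟨j, h⟩ else 0

/-- `A_j = z_{2j} z_{2j+1}` for `1 ≤ j ≤ m`. -/
def qevA (m j : ℕ) : QevR m := qevZ m (2 * j) * qevZ m (2 * j + 1)

/-- `z₁ = −(z₂z₃ + z₄z₅ + ⋯ + z_{2m}z_{2m+1})` (the quadric relation solved
for `z₁`). -/
def qevZ1 (m : ℕ) : QevR m := -(∑ i ∈ Finset.Icc 1 m, qevA m i)

/-- The ℂ-derivations `V_j = z_{2j}∂/∂z_{2j} − z_{2j+1}∂/∂z_{2j+1}` for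
`1 ≤ j ≤ m−1`, `V_m = z_{2m}∂/∂z_{2m} + ∑_{i=1}^{m−1} z_{2i+1}∂/∂z_{2i+1}` and
`V_{m+1} = z_{2m+1}∂/∂z_{2m+1} + ∑_{i=1}^{m−1} z_{2i+1}∂/∂z_{2i+1}`. -/
def qevV (m i : ℕ) : Derivation ℂ (QevR m) (QevR m) :=
  if i = m then
    MvPolynomial.mkDerivation ℂ (fun s =>
      if s.1 = 2 * m then qevZ m s.1
      else if s.1 % 2 = 1 ∧ s.1 ≤ 2 * m - 1 then qevZ m s.1 else 0)
  else if i = m + 1 then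
    MvPolynomial.mkDerivation ℂ (fun s =>
      if s.1 = 2 * m + 1 then qevZ m s.1
      else if s.1 % 2 = 1 ∧ s.1 ≤ 2 * m - 1 then qevZ m s.1 else 0)
  else
    MvPolynomial.mkDerivation ℂ (fun s =>
      if s.1 = 2 * i then qevZ m s.1
      else if s.1 = 2 * i + 1 then -(qevZ m s.1) else 0)

/-- `Ω = dz₂∧dz₃∧⋯∧dz_{2m+1} ∈ ⋀^{2m}_R Ω_{R/ℂ}`. -/
def qevOmega (m : ℕ) : ExteriorAlgebra (QevR m) (Ω[QevR m⁄ℂ]) :=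
  (((List.Ico 2 (2 * m + 2)).map (fun j =>
    ExteriorAlgebra.ι (QevR m) (KaehlerDifferential.D ℂ (QevR m) (qevZ m j)))).prod)

/-!
Put `H_k = z_{2k} ∂/∂z_{2k} − z_{2k+1} ∂/∂z_{2k+1}` for `1 ≤ k ≤ m`. Then `V_k = H_k` for `k < m`
and `V_m − V_{m+1} = H_m`, so `ι_{V_{m+1}} ι_{V_m} = ι_{V_{m+1}} ι_{H_m}` because contractions
square to zero. Anticommuting `ι_{H_m}` past `ι_{V_1} ⋯ ι_{V_{m−1}}` costs the sign `(−1)^{m−1}`.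
Since `H_k` only involves the `k`-th pair of coordinates and `ι_{H_k} (dz_{2k} ∧ dz_{2k+1}) = dA_k`,
contracting `Ω` by all the `H_k` gives `dA₁ ∧ ⋯ ∧ dA_m`. Finally `V_{m+1} A_j = A_j` for every `j`,
so contracting by `V_{m+1}` yields the alternating expansion of this product.
-/

theorem eraseIdx_listIco {a b i : ℕ} (hi : i < b - a) :
    (List.Ico a b).eraseIdx i = (List.Ico a b).filter fun k => k ≠ a + i := by
  have i_lt_length : i < (List.Ico a b).length := by rwa [List.Ico.length]
  have getElem_eq : (List.Ico a b)[i] = a + i := by simp [List.Ico]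
  rw [← (List.Ico.nodup a b).erase_getElem i i_lt_length, getElem_eq,
    (List.Ico.nodup a b).erase_eq_filter]
  exact List.filter_congr fun k _ => by grind

section IteratedContraction

open CliffordAlgebra

variable {R M α : Type*} [CommRing R] [AddCommGroup M] [Module R M] {Q : QuadraticForm R M}

theorem contractLeft_list_prod_ι (d : Module.Dual R M) (l : List M) :
    contractLeft d (l.map (ι Q)).prod =
      ∑ i : Fin l.length, ((-1 : R) ^ (i : ℕ) * d l[i]) • ((l.eraseIdx i).map (ι Q)).prod := by
  induction l with
  | nil => simp
  | cons v l ih =>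
    rw [List.map_cons, List.prod_cons, contractLeft_ι_mul, ih, Finset.mul_sum, sub_eq_add_neg,
      ← Finset.sum_neg_distrib]
    refine .trans ?_ (Fin.sum_univ_succ (n := l.length) _).symm
    simp [pow_succ]

theorem contractLeft_list_prod_ι_eq_zero {d : Module.Dual R M} {l : List M}
    (h : ∀ v ∈ l, d v = 0) : contractLeft d (l.map (ι Q)).prod = 0 := by
  simp [contractLeft_list_prod_ι, h]

theorem contractLeft_prod_Ico_ι (d : Module.Dual R M) (v : ℕ → M) (a b : ℕ) :
    contractLeft d ((List.Ico a b).map fun k => ι Q (v k)).prod =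
      ∑ j ∈ Finset.Ico a b, ((-1 : R) ^ (a + j) * d (v j)) •
        (((List.Ico a b).filter fun k => k ≠ j).map fun k => ι Q (v k)).prod := by
  have expansion := contractLeft_list_prod_ι (Q := Q) d ((List.Ico a b).map v)
  rw [List.map_map] at expansion
  refine expansion.trans ?_
  rw [Finset.sum_Ico_eq_sum_range, ← Fin.sum_univ_eq_sum_range]
  refine Fintype.sum_equiv (finCongr (by simp)) _ _ fun i => ?_
  have hi : (i : ℕ) < b - a := by simpa using i.2
  have entry : ((List.Ico a b).map v)[i] = v (a + i) := by
    rw [Fin.getElem_fin, List.getElem_map]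
    simp [List.Ico]
  have sign : (-1 : R) ^ (a + (a + (i : ℕ))) = (-1) ^ (i : ℕ) := by
    rw [← add_assoc, pow_add, (Even.add_self a).neg_one_pow, one_mul]
  rw [finCongr_apply_coe, entry, sign, List.eraseIdx_map, List.map_map, eraseIdx_listIco hi]
  rfl

theorem contractLeft_ι_mul_ι_mul (d : Module.Dual R M) (u v : M) (ω : CliffordAlgebra Q) :
    contractLeft d (ι Q u * ι Q v * ω) =
      ι Q (d u • v - d v • u) * ω + ι Q u * ι Q v * contractLeft d ω := by
  simp only [mul_assoc, contractLeft_ι_mul, map_sub, map_smul, sub_mul, mul_sub, smul_mul_assoc,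
    mul_smul_comm]
  abel

theorem foldr_contractLeft_ι_mul_ι_mul {d : α → Module.Dual R M} {l : List α} {u v : M}
    (hu : ∀ k ∈ l, d k u = 0) (hv : ∀ k ∈ l, d k v = 0) (ω : CliffordAlgebra Q) :
    l.foldr (fun k => contractLeft (d k)) (ι Q u * ι Q v * ω) =
      ι Q u * ι Q v * l.foldr (fun k => contractLeft (d k)) ω := by
  induction l with
  | nil => rfl
  | cons k l ih =>
    rw [List.forall_mem_cons] at hu hv
    simp [ih hu.2 hv.2, contractLeft_ι_mul_ι_mul, hu.1, hv.1]

theorem foldr_contractLeft_prod_ι_mul_ι {d : α → Module.Dual R M} {l : List α} {u v : α → M}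
    (hl : l.Nodup) (hu : ∀ i ∈ l, ∀ j ∈ l, i ≠ j → d i (u j) = 0)
    (hv : ∀ i ∈ l, ∀ j ∈ l, i ≠ j → d i (v j) = 0) :
    l.foldr (fun k => contractLeft (d k)) (l.map fun k => ι Q (u k) * ι Q (v k)).prod =
      (l.map fun k => ι Q (d k (u k) • v k - d k (v k) • u k)).prod := by
  induction l with
  | nil => rfl
  | cons k l ih =>
    obtain ⟨hk, hl⟩ := List.nodup_cons.mp hl
    have ne_k : ∀ j ∈ l, j ≠ k := fun j hj => ne_of_mem_of_not_mem hj hk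
    have ih' := ih hl (fun i hi j hj => hu i (.tail k hi) j (.tail k hj))
      fun i hi j hj => hv i (.tail k hi) j (.tail k hj)
    have contract_tail : contractLeft (d k)
        (l.map fun j => ι Q (d j (u j) • v j - d j (v j) • u j)).prod = 0 := by
      have contract_factor : ∀ w ∈ l.map fun j => d j (u j) • v j - d j (v j) • u j, d k w = 0 := by
        refine List.forall_mem_map.mpr fun j hj => ?_
        simp [hu k (.head l) j (.tail k hj) (ne_k j hj).symm,
          hv k (.head l) j (.tail k hj) (ne_k j hj).symm]
      simpa only [List.map_map, Function.comp_def] using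
        contractLeft_list_prod_ι_eq_zero (Q := Q) contract_factor
    rw [List.map_cons, List.prod_cons, List.foldr_cons, foldr_contractLeft_ι_mul_ι_mul
      (fun j hj => hu j (.tail k hj) k (.head l) (ne_k j hj))
      (fun j hj => hv j (.tail k hj) k (.head l) (ne_k j hj)), ih', contractLeft_ι_mul_ι_mul,
      contract_tail, mul_zero, add_zero, List.map_cons, List.prod_cons]

theorem contractLeft_foldr_contractLeft (e : Module.Dual R M) (d : α → Module.Dual R M)
    (l : List α) (ω : CliffordAlgebra Q) :
    contractLeft e (l.foldr (fun k => contractLeft (d k)) ω) =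
      (-1 : R) ^ l.length • l.foldr (fun k => contractLeft (d k)) (contractLeft e ω) := by
  induction l with
  | nil => simp
  | cons k l ih => simp [contractLeft_comm, ih, pow_succ]

end IteratedContraction

section ContrDer

open KaehlerDifferential

theorem linearMapEquivDerivation_symm_apply_D {R S M : Type*} [CommRing R] [CommRing S]
    [Algebra R S] [AddCommGroup M] [Module R M] [Module S M] [IsScalarTower R S M]
    (V : Derivation R S M) (g : S) : (linearMapEquivDerivation R S).symm V (D R S g) = V g :=
  V.liftKaehlerDifferential_comp_D g

variable {A : Type} [CommRing A] [Algebra ℂ A] {α : Type*}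

theorem contrDer_contrDer_sub (V W : Derivation ℂ A A) (ω : ExteriorAlgebra A (Ω[A⁄ℂ])) :
    contrDer V (contrDer (W - V) ω) = contrDer V (contrDer W ω) := by
  simp only [contrDer, map_sub, LinearMap.sub_apply, CliffordAlgebra.contractLeft_contractLeft,
    sub_zero]

theorem foldr_contrDer_prod_D_mul_D {V : α → Derivation ℂ A A} {l : List α} {f g : α → A}
    (hl : l.Nodup) (hf : ∀ i ∈ l, ∀ j ∈ l, i ≠ j → V i (f j) = 0)
    (hg : ∀ i ∈ l, ∀ j ∈ l, i ≠ j → V i (g j) = 0)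
    (hfk : ∀ k ∈ l, V k (f k) = f k) (hgk : ∀ k ∈ l, V k (g k) = -g k) :
    l.foldr (fun k => contrDer (V k)) (l.map fun k =>
        ExteriorAlgebra.ι A (D ℂ A (f k)) * ExteriorAlgebra.ι A (D ℂ A (g k))).prod =
      (l.map fun k => ExteriorAlgebra.ι A (D ℂ A (f k * g k))).prod := by
  refine (foldr_contractLeft_prod_ι_mul_ι hl ?_ ?_).trans
    (congrArg List.prod (List.map_congr_left fun k hk => ?_))
  · simpa only [linearMapEquivDerivation_symm_apply_D] using hf
  · simpa only [linearMapEquivDerivation_symm_apply_D] using hg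
  · simp only [linearMapEquivDerivation_symm_apply_D]
    rw [hfk k hk, hgk k hk, neg_smul, sub_neg_eq_add, ← Derivation.leibniz]

end ContrDer

theorem prod_map_Ico_two_mul {E : Type*} [Monoid E] (f : ℕ → E) {a b : ℕ} (hab : a ≤ b) :
    ((List.Ico (2 * a) (2 * b)).map f).prod =
      ((List.Ico a b).map fun k => f (2 * k) * f (2 * k + 1)).prod := by
  induction b, hab using Nat.le_induction with
  | base => simp
  | succ b hab ih =>
    have split_top : List.Ico (2 * a) (2 * (b + 1)) =
        List.Ico (2 * a) (2 * b) ++ [2 * b, 2 * b + 1] := by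
      rw [mul_add_one, List.Ico.succ_top (by omega), List.Ico.succ_top (by omega),
        List.append_assoc, List.singleton_append]
    simp [split_top, List.Ico.succ_top hab, ih]

/-- The derivation `H_k = z_{2k} ∂/∂z_{2k} − z_{2k+1} ∂/∂z_{2k+1}`, which extends the family
`V_1, …, V_{m−1}` to the last pair of coordinates. For `k` outside `1, …, m` it is `0`. -/
def qevHyperbolicDer (m k : ℕ) : Derivation ℂ (QevR m) (QevR m) :=
  mkDerivation ℂ fun s =>
    if s.1 = 2 * k then qevZ m s.1 else if s.1 = 2 * k + 1 then -qevZ m s.1 else 0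

theorem mkDerivation_qevZ {m j : ℕ} (f : {j : ℕ // 2 ≤ j ∧ j ≤ 2 * m + 1} → QevR m)
    (hj : 2 ≤ j ∧ j ≤ 2 * m + 1) : mkDerivation ℂ f (qevZ m j) = f ⟨j, hj⟩ := by
  rw [qevZ, dif_pos hj, mkDerivation_X]

theorem qevHyperbolicDer_qevZ_even {m i : ℕ} (k : ℕ) (hi : i ∈ List.Ico 1 (m + 1)) :
    qevHyperbolicDer m k (qevZ m (2 * i)) = if i = k then qevZ m (2 * i) else 0 := by
  rw [List.Ico.mem] at hi
  rw [qevHyperbolicDer, mkDerivation_qevZ _ (by omega)]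
  dsimp only
  split_ifs <;> first | rfl | omega

theorem qevHyperbolicDer_qevZ_odd {m i : ℕ} (k : ℕ) (hi : i ∈ List.Ico 1 (m + 1)) :
    qevHyperbolicDer m k (qevZ m (2 * i + 1)) = if i = k then -qevZ m (2 * i + 1) else 0 := by
  rw [List.Ico.mem] at hi
  rw [qevHyperbolicDer, mkDerivation_qevZ _ (by omega)]
  dsimp only
  split_ifs <;> first | rfl | omega

theorem qevV_of_lt {m k : ℕ} (hk : k < m) : qevV m k = qevHyperbolicDer m k := by
  rw [qevV, if_neg (by omega), if_neg (by omega), qevHyperbolicDer]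

theorem qevV_sub_qevV_succ (m : ℕ) : qevV m m - qevV m (m + 1) = qevHyperbolicDer m m := by
  refine derivation_ext fun s => ?_
  rw [qevV, if_pos rfl, qevV, if_neg (by omega), if_pos rfl, qevHyperbolicDer, Derivation.sub_apply]
  simp only [mkDerivation_X]
  split_ifs <;> first | omega | simp

theorem qevV_succ_qevA {m j : ℕ} (hj : j ∈ Finset.Ico 1 (m + 1)) :
    qevV m (m + 1) (qevA m j) = qevA m j := by
  rw [Finset.mem_Ico] at hj
  have even_eq_zero : qevV m (m + 1) (qevZ m (2 * j)) = 0 := by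
    rw [qevV, if_neg (by omega), if_pos rfl, mkDerivation_qevZ _ (by omega)]
    dsimp only
    rw [if_neg (by omega), if_neg (by omega)]
  have odd_eq_self : qevV m (m + 1) (qevZ m (2 * j + 1)) = qevZ m (2 * j + 1) := by
    rw [qevV, if_neg (by omega), if_pos rfl, mkDerivation_qevZ _ (by omega)]
    dsimp only
    split_ifs <;> first | rfl | omega
  rw [qevA, Derivation.leibniz, even_eq_zero, odd_eq_self, smul_zero, add_zero, smul_eq_mul]

theorem foldr_contrDer_qevHyperbolicDer_qevOmega (m : ℕ) :
    (List.Ico 1 (m + 1)).foldr (fun k => contrDer (qevHyperbolicDer m k)) (qevOmega m) =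
      ((List.Ico 1 (m + 1)).map fun k =>
        ExteriorAlgebra.ι (QevR m) (KaehlerDifferential.D ℂ (QevR m) (qevA m k))).prod := by
  have qevOmega_eq : qevOmega m = _ := prod_map_Ico_two_mul _ m.succ_pos
  rw [qevOmega_eq]
  refine foldr_contrDer_prod_D_mul_D (List.Ico.nodup 1 (m + 1)) ?_ ?_ ?_ ?_
  · exact fun i _ j hj hij => by rw [qevHyperbolicDer_qevZ_even i hj, if_neg hij.symm]
  · exact fun i _ j hj hij => by rw [qevHyperbolicDer_qevZ_odd i hj, if_neg hij.symm]
  · exact fun k hk => by rw [qevHyperbolicDer_qevZ_even k hk, if_pos rfl]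
  · exact fun k hk => by rw [qevHyperbolicDer_qevZ_odd k hk, if_pos rfl]

theorem contrDer_qevHyperbolicDer_foldr_qevV {m : ℕ} (hm : 1 ≤ m)
    (ω : ExteriorAlgebra (QevR m) (Ω[QevR m⁄ℂ])) :
    contrDer (qevHyperbolicDer m m) ((List.Ico 1 m).foldr (fun k => contrDer (qevV m k)) ω) =
      (-1 : QevR m) ^ (m - 1) •
        (List.Ico 1 (m + 1)).foldr (fun k => contrDer (qevHyperbolicDer m k)) ω := by
  have foldr_qevV : (List.Ico 1 m).foldr (fun k => contrDer (qevV m k)) ω =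
      (List.Ico 1 m).foldr (fun k => contrDer (qevHyperbolicDer m k)) ω :=
    List.foldr_ext _ _ _ fun k hk _ => by rw [qevV_of_lt (List.Ico.mem.mp hk).2]
  rw [foldr_qevV, List.Ico.succ_top hm, List.foldr_append, ← List.Ico.length 1 m]
  exact contractLeft_foldr_contractLeft _ _ _ ω

theorem contrDer_qevV_succ_prod_D_qevA (m : ℕ) :
    contrDer (qevV m (m + 1)) ((List.Ico 1 (m + 1)).map fun k =>
        ExteriorAlgebra.ι (QevR m) (KaehlerDifferential.D ℂ (QevR m) (qevA m k))).prod =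
      ∑ j ∈ Finset.Ico 1 (m + 1), ((-1 : QevR m) ^ (1 + j) * qevA m j) •
        (((List.Ico 1 (m + 1)).filter fun k => k ≠ j).map fun k =>
          ExteriorAlgebra.ι (QevR m) (KaehlerDifferential.D ℂ (QevR m) (qevA m k))).prod := by
  refine (contractLeft_prod_Ico_ι _ _ 1 (m + 1)).trans (Finset.sum_congr rfl fun j hj => ?_)
  rw [linearMapEquivDerivation_symm_apply_D, qevV_succ_qevA hj]

/-- Lemma 3.7 of the paper:
`ι_{V_{m+1}} ι_{V_m} ι_{V₁} ⋯ ι_{V_{m−1}} Ω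
 = ∑_{j=1}^m (−1)^{m+j} A_j dA₁∧⋯∧\widehat{dA_j}∧⋯∧dA_m` for the even quadric `Q_{2m}`. -/
theorem qev_contraction_lemma (m : ℕ) (hm : 2 ≤ m) :
    ((m + 1) :: m :: List.Ico 1 m).foldr (fun i ω => contrDer (qevV m i) ω) (qevOmega m) =
      ∑ j ∈ Finset.Icc 1 m, ((-1 : QevR m) ^ (m + j) * qevA m j) •
        (((List.Ico 1 (m + 1)).filter (fun k => k ≠ j)).map (fun k =>
          ExteriorAlgebra.ι (QevR m) (KaehlerDifferential.D ℂ (QevR m) (qevA m k)))).prod := by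
  have hm₁ : 1 ≤ m := by omega
  calc
    _ = contrDer (qevV m (m + 1)) (contrDer (qevHyperbolicDer m m)
          ((List.Ico 1 m).foldr (fun k => contrDer (qevV m k)) (qevOmega m))) := by
      rw [List.foldr_cons, List.foldr_cons, ← qevV_sub_qevV_succ, contrDer_contrDer_sub]
    _ = (-1 : QevR m) ^ (m - 1) • contrDer (qevV m (m + 1)) ((List.Ico 1 (m + 1)).map fun k =>
          ExteriorAlgebra.ι (QevR m) (KaehlerDifferential.D ℂ (QevR m) (qevA m k))).prod := by
      rw [contrDer_qevHyperbolicDer_foldr_qevV hm₁, map_smul,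
        foldr_contrDer_qevHyperbolicDer_qevOmega]
    _ = _ := by
      rw [contrDer_qevV_succ_prod_D_qevA, Finset.smul_sum]
      refine Finset.sum_congr rfl fun j _ => ?_
      rw [smul_smul, ← mul_assoc, ← pow_add, ← add_assoc, Nat.sub_add_cancel hm₁]

end
end
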